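/- For the four-vertex model with scalar-product boundary conditions on an L×M rectangle with N ≤ L paths, the AFP correlation function satisfies G_{L,M,N}(p,q) = F_{M−L+N+1, M, M−L+1}(r̃, L−p̃), where q̃ = p+q−L+N, r̃ = ⌊(q̃+1)/2⌋, and p̃ = p − ((q̃+1) mod 2), and F and G denote the Emptiness Formation Probability and Anti-ferroelectric phase Formation Probability respectively. -/

import Mathlib

/-- A configuration of the four-vertex model on an `L × M` rectangle with
scalar-product boundary conditions and `N` paths; `h`/`v` are the states of
the horizontal/vertical edges (see the vertex rule for the four allowed
local configurations). -/
structure FourVertexConfig (L M N : ℕ) where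
  h : ℤ × ℤ → Bool
  v : ℤ × ℤ → Bool
  h_support : ∀ n m : ℤ, (n < 1 ∨ (L : ℤ) ≤ n ∨ m < 1 ∨ (M : ℤ) < m) → h (n, m) = false
  v_support : ∀ n m : ℤ, (n < 1 ∨ (L : ℤ) < n ∨ m < 0 ∨ (M : ℤ) < m) → v (n, m) = false
  south : ∀ n : ℤ, 1 ≤ n → n ≤ (L : ℤ) → (v (n, 0) = true ↔ n ≤ (N : ℤ))
  north : ∀ n : ℤ, 1 ≤ n → n ≤ (L : ℤ) → (v (n, (M : ℤ)) = true ↔ (L : ℤ) - (N : ℤ) < n)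
  vertexRule : ∀ n m : ℤ, 1 ≤ n → n ≤ (L : ℤ) → 1 ≤ m → m ≤ (M : ℤ) →
    (h (n-1, m) = false ∧ v (n, m-1) = false ∧ h (n, m) = false ∧ v (n, m) = false) ∨
    (h (n-1, m) = false ∧ v (n, m-1) = true  ∧ h (n, m) = false ∧ v (n, m) = true) ∨
    (h (n-1, m) = false ∧ v (n, m-1) = true  ∧ h (n, m) = true  ∧ v (n, m) = false) ∨
    (h (n-1, m) = true  ∧ v (n, m-1) = false ∧ h (n, m) = false ∧ v (n, m) = true)

/-- Vertex of type `a`: all four incident edges thin. -/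
def isA {L M N : ℕ} (c : FourVertexConfig L M N) (nm : ℤ × ℤ) : Bool :=
  !c.h (nm.1 - 1, nm.2) && !c.v (nm.1, nm.2 - 1) && !c.h nm && !c.v nm

/-- Vertex of type `c`: one of the two turning vertices. -/
def isC {L M N : ℕ} (c : FourVertexConfig L M N) (nm : ℤ × ℤ) : Bool :=
  (!c.h (nm.1 - 1, nm.2) && c.v (nm.1, nm.2 - 1) && c.h nm && !c.v nm) ||
  (c.h (nm.1 - 1, nm.2) && !c.v (nm.1, nm.2 - 1) && !c.h nm && c.v nm)

/-- Emptiness Formation Probability `F_{L,M,N}(p,q)`: the probability, under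
the uniform measure on configurations, that the topmost `q` vertices of the
`p`-th vertical line which lie in the hexagonal domain (i.e. the vertices
`(p, m)` with `M-q+1 ≤ m ≤ M-L+N+p`) are all of type `a`. -/
noncomputable def EFP (L M N p q : ℕ) : ℚ :=
  (Nat.card { c : FourVertexConfig L M N //
      ∀ m : ℤ, (M : ℤ) - q + 1 ≤ m → m ≤ (M : ℤ) - L + N + p →
        isA c ((p : ℤ), m) = true } : ℚ) /
    (Nat.card (FourVertexConfig L M N) : ℚ)

/-- Anti-ferroelectric phase Formation Probability `G_{L,M,N}(p,q)`: the
probability that the same set of vertices are all of type `c`. -/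
noncomputable def AFP (L M N p q : ℕ) : ℚ :=
  (Nat.card { c : FourVertexConfig L M N //
      ∀ m : ℤ, (M : ℤ) - q + 1 ≤ m → m ≤ (M : ℤ) - L + N + p →
        isC c ((p : ℤ), m) = true } : ℚ) /
    (Nat.card (FourVertexConfig L M N) : ℚ)

/-!
A configuration is determined by its height function, which counts the paths to the left of a
point, and the possible height functions encode the plane partitions in an
`N × (L - N) × (M - L + 1)` box. Complementing a plane partition and cyclically permuting the axes
of the box therefore gives a bijection onto the configurations with `M - L + 1` paths on the
`(M - L + N + 1) × M` rectangle. Both events of the theorem are a single inequality on the height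
function: an alternating top segment of column `p` forces the height at its foot to take its
largest possible value, and a top segment is empty exactly when the height at its foot vanishes.
The two inequalities correspond under the bijection.
-/

/-- Height functions on the `L × M` rectangle: `f n m` stands for the number of paths that cross
level `m` in the columns `1, …, n`. The inequalities encode the vertex rule; `south` and `north`
encode the boundary conditions. -/
structure IsHeightFunction (L M N : ℕ) (f : ℤ → ℤ → ℤ) : Prop where
  column_le : ∀ n m : ℤ, f (n - 1) m ≤ f n m
  le_column_add_one : ∀ n m : ℤ, f n m ≤ f (n - 1) m + 1
  level_le : ∀ n m : ℤ, 1 ≤ m → m ≤ M → f n m ≤ f n (m - 1)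
  diag_le : ∀ n m : ℤ, 1 ≤ m → m ≤ M → f (n - 1) (m - 1) ≤ f n m
  le_antidiag_add_one : ∀ n m : ℤ, 1 ≤ m → m ≤ M → f n (m - 1) ≤ f (n - 1) m + 1
  south : ∀ n : ℤ, 0 ≤ n → n ≤ L → f n 0 = min n N
  north : ∀ n : ℤ, 0 ≤ n → n ≤ L → f n M = max 0 (n - (L - N))

namespace IsHeightFunction

variable {L M N : ℕ} {f : ℤ → ℤ → ℤ} {n n' m m' : ℤ}

theorem antitone_level (hf : IsHeightFunction L M N f) (hm : 0 ≤ m) (hmm' : m ≤ m')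
    (hm' : m' ≤ M) : f n m' ≤ f n m := by
  induction m', hmm' using Int.leInduction with
  | base => exact le_rfl
  | succ k hk ih =>
    have step := hf.level_le n (k + 1) (by omega) hm'
    rw [add_sub_cancel_right] at step
    exact step.trans (ih (by omega))

theorem le_of_sub_le_sub (hf : IsHeightFunction L M N f) (hnn' : n ≤ n') (hm₀ : 0 ≤ m)
    (hm : m ≤ M) (hm₀' : 0 ≤ m') (hm' : m' ≤ M) (h : m' - m ≤ n' - n) : f n m ≤ f n' m' := by
  induction n', hnn' using Int.leInduction generalizing m' with
  | base => exact hf.antitone_level hm₀' (by omega) hm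
  | succ k hk ih =>
    rcases hm₀'.eq_or_lt with rfl | hpos
    · have step := hf.column_le (k + 1) 0
      rw [add_sub_cancel_right] at step
      exact (ih le_rfl hm' (by omega)).trans step
    · have step := hf.diag_le (k + 1) m' (by omega) hm'
      rw [add_sub_cancel_right] at step
      exact (ih (by omega) (by omega) (by omega)).trans step

theorem le_add_of_sub_le_sub (hf : IsHeightFunction L M N f) (hn'n : n' ≤ n) (hm₀ : 0 ≤ m)
    (hm : m ≤ M) (hm₀' : 0 ≤ m') (hm' : m' ≤ M) (h : m' - m ≤ n - n') :
    f n m ≤ f n' m' + (n - n') := by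
  induction n, hn'n using Int.leInduction generalizing m with
  | base => simpa using hf.antitone_level hm₀' (by omega) hm
  | succ k hk ih =>
    rcases hm.eq_or_lt with rfl | hlt
    · have step := hf.le_column_add_one (k + 1) M
      rw [add_sub_cancel_right] at step
      linarith [ih hm₀ le_rfl (by omega)]
    · have step := hf.le_antidiag_add_one (k + 1) (m + 1) (by omega) (by omega)
      rw [add_sub_cancel_right, add_sub_cancel_right] at step
      linarith [ih (m := m + 1) (by omega) (by omega) (by omega)]

theorem left (hf : IsHeightFunction L M N f) (hm₀ : 0 ≤ m) (hm : m ≤ M) : f 0 m = 0 := by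
  have lower := hf.antitone_level (n := 0) hm₀ hm le_rfl
  have upper := hf.antitone_level (n := 0) le_rfl hm₀ hm
  have south := hf.south 0 le_rfl (by omega)
  have north := hf.north 0 le_rfl (by omega)
  omega

theorem right (hf : IsHeightFunction L M N f) (hm₀ : 0 ≤ m) (hm : m ≤ M) : f L m = N := by
  have lower := hf.antitone_level (n := L) hm₀ hm le_rfl
  have upper := hf.antitone_level (n := L) le_rfl hm₀ hm
  have south := hf.south L (by omega) le_rfl
  have north := hf.north L (by omega) le_rfl
  omega

theorem paths_le (hf : IsHeightFunction L M N f) : N ≤ L := by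
  have south := hf.south L (by omega) le_rfl
  have right := hf.right le_rfl (Int.natCast_nonneg M)
  omega

theorem nonneg (hf : IsHeightFunction L M N f) (hn : 0 ≤ n) (hm₀ : 0 ≤ m) (hm : m ≤ M) :
    0 ≤ f n m :=
  (hf.left hm₀ hm).symm.trans_le (hf.le_of_sub_le_sub hn hm₀ hm hm₀ hm (by omega))

theorem le_column (hf : IsHeightFunction L M N f) (hn : 0 ≤ n) (hm₀ : 0 ≤ m) (hm : m ≤ M) :
    f n m ≤ n := by
  have bound := hf.le_add_of_sub_le_sub hn hm₀ hm hm₀ hm (by omega)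
  rw [hf.left hm₀ hm] at bound
  omega

theorem le_paths (hf : IsHeightFunction L M N f) (hn : n ≤ L) (hm₀ : 0 ≤ m) (hm : m ≤ M) :
    f n m ≤ N :=
  (hf.le_of_sub_le_sub hn hm₀ hm hm₀ hm (by omega)).trans_eq (hf.right hm₀ hm)

theorem sub_le (hf : IsHeightFunction L M N f) (hn₀ : 0 ≤ n) (hn : n ≤ L) (hm₀ : 0 ≤ m)
    (hm : m ≤ M) : n - (L - N) ≤ f n m :=
  (le_max_right 0 _).trans ((hf.north n hn₀ hn).symm.trans_le (hf.antitone_level hm₀ hm le_rfl))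

/- From `(N, 0)`, where `f = N`, move along the diagonal and then along the antidiagonal,
losing `N - i`. -/
theorem le_of_add_two_mul_le (hf : IsHeightFunction L M N f) {i : ℤ} (hiN : i ≤ N) (hin : i ≤ n)
    (hm₀ : 0 ≤ m) (hm : m ≤ M) (h : m + 2 * i ≤ n + N) : i ≤ f n m := by
  have hNL := hf.paths_le
  have corner : f N 0 = N := by rw [hf.south N (by omega) (by omega), min_self]
  have rise : f N 0 ≤ f (N + (n - i)) (max 0 (m - (N - i))) :=
    hf.le_of_sub_le_sub (by omega) le_rfl (by omega) (by omega) (by omega) (by omega)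
  have loss : f (N + (n - i)) (max 0 (m - (N - i))) ≤ f n m + (N + (n - i) - n) :=
    hf.le_add_of_sub_le_sub (by omega) (by omega) (by omega) hm₀ hm (by omega)
  omega

/- To `(L - N, M)`, where `f = 0`, move along the antidiagonal, losing `u`, and then along the
diagonal. -/
theorem le_of_add_le_add_two_mul (hf : IsHeightFunction L M N f) {u : ℤ} (hu : 0 ≤ u)
    (hn : n ≤ L - N + u) (hm₀ : 0 ≤ m) (hm : m ≤ M) (h : M + n ≤ m + (L - N) + 2 * u) :
    f n m ≤ u := by
  have hNL := hf.paths_le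
  have corner : f (L - N) M = 0 := by
    rw [hf.north (L - N) (by omega) (by omega), sub_self, max_self]
  have loss : f n m ≤ f (n - u) (min M (m + u)) + (n - (n - u)) :=
    hf.le_add_of_sub_le_sub (by omega) hm₀ hm (by omega) (by omega) (by omega)
  have rise : f (n - u) (min M (m + u)) ≤ f (L - N) M :=
    hf.le_of_sub_le_sub (by omega) (by omega) (by omega) (by omega) le_rfl (by omega)
  omega

end IsHeightFunction

namespace FourVertexConfig

section Height

variable {L M N : ℕ} (c : FourVertexConfig L M N)

theorem vertexRule_of_row (n : ℤ) {m : ℤ} (hm₁ : 1 ≤ m) (hm : m ≤ M) :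
    (c.h (n - 1, m) = false ∧ c.v (n, m - 1) = false ∧ c.h (n, m) = false ∧ c.v (n, m) = false) ∨
    (c.h (n - 1, m) = false ∧ c.v (n, m - 1) = true ∧ c.h (n, m) = false ∧ c.v (n, m) = true) ∨
    (c.h (n - 1, m) = false ∧ c.v (n, m - 1) = true ∧ c.h (n, m) = true ∧ c.v (n, m) = false) ∨
    (c.h (n - 1, m) = true ∧ c.v (n, m - 1) = false ∧ c.h (n, m) = false ∧ c.v (n, m) = true) := by
  by_cases hn : 1 ≤ n ∧ n ≤ (L : ℤ)
  · exact c.vertexRule n m hn.1 hn.2 hm₁ hm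
  · exact Or.inl ⟨c.h_support _ _ (by omega), c.v_support _ _ (by omega),
      c.h_support _ _ (by omega), c.v_support _ _ (by omega)⟩

theorem flux_conservation (n : ℤ) {m : ℤ} (hm₁ : 1 ≤ m) (hm : m ≤ M) :
    (c.h (n - 1, m)).toInt + (c.v (n, m - 1)).toInt = (c.h (n, m)).toInt + (c.v (n, m)).toInt := by
  rcases c.vertexRule_of_row n hm₁ hm with
    ⟨west, south, east, north⟩ | ⟨west, south, east, north⟩ | ⟨west, south, east, north⟩ |
      ⟨west, south, east, north⟩ <;>
    simp [west, south, east, north]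

/-- The number of paths of `c` crossing level `m` in the columns `1, …, n`. -/
noncomputable def height (n m : ℤ) : ℤ :=
  ∑ x ∈ Finset.Icc 1 n, (c.v (x, m)).toInt

theorem height_of_nonpos {n : ℤ} (hn : n ≤ 0) (m : ℤ) : c.height n m = 0 := by
  rw [height, Finset.Icc_eq_empty (by omega), Finset.sum_empty]

theorem height_eq_add_v (n m : ℤ) : c.height n m = c.height (n - 1) m + (c.v (n, m)).toInt := by
  by_cases hn : n < 1
  · rw [c.height_of_nonpos (by omega), c.height_of_nonpos (by omega),
      c.v_support n m (Or.inl hn)]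
    rfl
  · rw [height, height, ← Finset.insert_Icc_sub_one_right_eq_Icc (not_lt.1 hn),
      Finset.sum_insert (by simp), add_comm]

theorem height_sub_one_eq_add_h (n : ℤ) {m : ℤ} (hm₁ : 1 ≤ m) (hm : m ≤ M) :
    c.height n (m - 1) = c.height n m + (c.h (n, m)).toInt := by
  have column_step (k : ℤ) : c.height k (m - 1) - c.height k m - (c.h (k, m)).toInt =
      c.height (k - 1) (m - 1) - c.height (k - 1) m - (c.h (k - 1, m)).toInt := by
    linarith [c.height_eq_add_v k (m - 1), c.height_eq_add_v k m, c.flux_conservation k hm₁ hm]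
  suffices c.height n (m - 1) - c.height n m - (c.h (n, m)).toInt = 0 by linarith
  induction n using Int.induction_on with
  | zero => simp [c.height_of_nonpos le_rfl, c.h_support 0 m]
  | succ k ih => rw [column_step, add_sub_cancel_right, ih]
  | pred k ih => rw [← column_step, ih]

theorem v_eq_true_iff (n m : ℤ) : c.v (n, m) = true ↔ c.height (n - 1) m < c.height n m := by
  rw [c.height_eq_add_v n m]
  cases c.v (n, m) <;> simp

theorem h_eq_true_iff (n : ℤ) {m : ℤ} (hm₁ : 1 ≤ m) (hm : m ≤ M) :
    c.h (n, m) = true ↔ c.height n m < c.height n (m - 1) := by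
  rw [c.height_sub_one_eq_add_h n hm₁ hm]
  cases c.h (n, m) <;> simp

theorem height_eq_of_column_step {m : ℤ} {g : ℤ → ℤ} (hg₀ : g 0 = 0)
    (hg : ∀ n : ℤ, 1 ≤ n → n ≤ L → g n = g (n - 1) + (c.v (n, m)).toInt) {n : ℤ} (hn₀ : 0 ≤ n)
    (hn : n ≤ L) : c.height n m = g n := by
  induction n, hn₀ using Int.leInduction with
  | base => rw [c.height_of_nonpos le_rfl, hg₀]
  | succ k hk ih =>
    rw [height_eq_add_v, hg (k + 1) (by omega) hn, add_sub_cancel_right, ih (by omega)]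

theorem isHeightFunction_height (hNL : N ≤ L) : IsHeightFunction L M N c.height where
  column_le n m := by
    rw [c.height_eq_add_v n m]
    cases c.v (n, m) <;> simp
  le_column_add_one n m := by
    rw [c.height_eq_add_v n m]
    cases c.v (n, m) <;> simp
  level_le n m hm₁ hm := by
    rw [c.height_sub_one_eq_add_h n hm₁ hm]
    cases c.h (n, m) <;> simp
  diag_le n m hm₁ hm := by
    rw [c.height_eq_add_v n m, c.height_sub_one_eq_add_h (n - 1) hm₁ hm]
    rcases c.vertexRule_of_row n hm₁ hm with
      ⟨west, -, -, north⟩ | ⟨west, -, -, north⟩ | ⟨west, -, -, north⟩ | ⟨west, -, -, north⟩ <;>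
      simp [west, north]
  le_antidiag_add_one n m hm₁ hm := by
    rw [c.height_sub_one_eq_add_h n hm₁ hm, c.height_eq_add_v n m]
    rcases c.vertexRule_of_row n hm₁ hm with
      ⟨-, -, east, north⟩ | ⟨-, -, east, north⟩ | ⟨-, -, east, north⟩ | ⟨-, -, east, north⟩ <;>
      simp [east, north]
  south n hn₀ hn := by
    refine c.height_eq_of_column_step (g := fun n ↦ min n N) (by simp) (fun n hn₁ hn ↦ ?_) hn₀ hn
    simp only [Bool.toInt, cond_eq_ite, c.south n hn₁ hn]
    split_ifs <;> omega
  north n hn₀ hn := by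
    refine c.height_eq_of_column_step (g := fun n ↦ max 0 (n - (L - N))) (by simpa using hNL)
      (fun n hn₁ hn ↦ ?_) hn₀ hn
    simp only [Bool.toInt, cond_eq_ite, c.north n hn₁ hn]
    split_ifs <;> omega

theorem ext_of_height {c d : FourVertexConfig L M N}
    (h : ∀ n m : ℤ, 0 ≤ n → n ≤ L → 0 ≤ m → m ≤ M → c.height n m = d.height n m) : c = d := by
  have v_eq : c.v = d.v := by
    funext ⟨n, m⟩
    by_cases hbox : 1 ≤ n ∧ n ≤ L ∧ 0 ≤ m ∧ m ≤ M
    · rw [Bool.eq_iff_iff, c.v_eq_true_iff, d.v_eq_true_iff,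
        h n m (by omega) (by omega) (by omega) (by omega),
        h (n - 1) m (by omega) (by omega) (by omega) (by omega)]
    · rw [c.v_support n m (by omega), d.v_support n m (by omega)]
  have h_eq : c.h = d.h := by
    funext ⟨n, m⟩
    by_cases hbox : 1 ≤ n ∧ n < L ∧ 1 ≤ m ∧ m ≤ M
    · rw [Bool.eq_iff_iff, c.h_eq_true_iff n (by omega) (by omega),
        d.h_eq_true_iff n (by omega) (by omega),
        h n m (by omega) (by omega) (by omega) (by omega),
        h n (m - 1) (by omega) (by omega) (by omega) (by omega)]
    · rw [c.h_support n m (by omega), d.h_support n m (by omega)]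
  cases c
  cases d
  congr

end Height

section OfHeight

variable {L M N : ℕ} {f : ℤ → ℤ → ℤ}

/-- The configuration with a prescribed height function: an edge is occupied when `f` jumps
across it. -/
def ofHeight (hf : IsHeightFunction L M N f) : FourVertexConfig L M N where
  h nm := decide (1 ≤ nm.1 ∧ nm.1 < L ∧ 1 ≤ nm.2 ∧ nm.2 ≤ M ∧ f nm.1 nm.2 < f nm.1 (nm.2 - 1))
  v nm := decide (1 ≤ nm.1 ∧ nm.1 ≤ L ∧ 0 ≤ nm.2 ∧ nm.2 ≤ M ∧ f (nm.1 - 1) nm.2 < f nm.1 nm.2)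
  h_support n m h := by
    simp only [decide_eq_false_iff_not]
    omega
  v_support n m h := by
    simp only [decide_eq_false_iff_not]
    omega
  south n hn₁ hn := by
    simp only [decide_eq_true_eq]
    rw [hf.south n (by omega) hn, hf.south (n - 1) (by omega) (by omega)]
    omega
  north n hn₁ hn := by
    simp only [decide_eq_true_eq]
    rw [hf.north n (by omega) hn, hf.north (n - 1) (by omega) (by omega)]
    omega
  vertexRule n m hn₁ hn hm₁ hm := by
    have diag := hf.diag_le n m hm₁ hm
    have level := hf.level_le n m hm₁ hm
    have antidiag := hf.le_antidiag_add_one n m hm₁ hm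
    have level_west := hf.level_le (n - 1) m hm₁ hm
    have column := hf.column_le n m
    have left (hn : n = 1) : f (n - 1) m = f (n - 1) (m - 1) := by
      subst hn
      exact (hf.left (by omega) hm).trans (hf.left (by omega) (by omega)).symm
    have right (hn : n = L) : f n m = f n (m - 1) := by
      subst hn
      exact (hf.right (by omega) hm).trans (hf.right (by omega) (by omega)).symm
    simp only [decide_eq_true_eq, decide_eq_false_iff_not]
    omega

theorem height_ofHeight (hf : IsHeightFunction L M N f) {n m : ℤ} (hn₀ : 0 ≤ n) (hn : n ≤ L)
    (hm₀ : 0 ≤ m) (hm : m ≤ M) : (ofHeight hf).height n m = f n m := by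
  refine height_eq_of_column_step _ (g := (f · m)) (hf.left hm₀ hm) (fun k hk₁ hk ↦ ?_) hn₀ hn
  have lower := hf.column_le k m
  have upper := hf.le_column_add_one k m
  simp only [ofHeight, Bool.toInt, cond_eq_ite, decide_eq_true_eq]
  split_ifs <;> omega

end OfHeight

end FourVertexConfig

/-- Plane partitions in an `A × B × C` box, given by their Young diagram of unit cells, which are
numbered from `(1, 1, 1)` to `(A, B, C)`. -/
@[ext]
structure BoxedPlanePartition (A B C : ℕ) where
  cells : Set (ℤ × ℤ × ℤ)
  cells_subset : cells ⊆ Set.Icc 1 ((A : ℤ), (B : ℤ), (C : ℤ))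
  mem_of_le : ∀ {x y : ℤ × ℤ × ℤ}, 1 ≤ x → x ≤ y → y ∈ cells → x ∈ cells

namespace BoxedPlanePartition

variable {A B C : ℕ}

section Rotation

/-- The plane partition formed by the cells of the box missing from `x`, turned around by the
point reflection of the box. -/
def complement (x : BoxedPlanePartition A B C) : BoxedPlanePartition A B C where
  cells := {y | y ∈ Set.Icc 1 ((A : ℤ), (B : ℤ), (C : ℤ)) ∧
    ((A : ℤ), (B : ℤ), (C : ℤ)) + 1 - y ∉ x.cells}
  cells_subset _ hy := hy.1
  mem_of_le hone hle hy :=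
    ⟨⟨hone, hle.trans hy.1.2⟩, fun hmem ↦ hy.2 (x.mem_of_le
      (le_sub_iff_add_le'.2 (by gcongr; exact hy.1.2)) (sub_le_sub_left hle _) hmem)⟩

theorem complement_involutive :
    Function.Involutive (complement : BoxedPlanePartition A B C → BoxedPlanePartition A B C) := by
  intro x
  ext1
  ext ⟨i, j, k⟩
  have in_box (hmem : (i, j, k) ∈ x.cells) := x.cells_subset hmem
  simp only [complement, Set.mem_ofPred_eq, sub_sub_cancel, not_and_not_right]
  simp only [Set.mem_Icc, Prod.le_def, Prod.fst_one, Prod.snd_one, Prod.fst_add, Prod.snd_add,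
    Prod.fst_sub, Prod.snd_sub] at in_box ⊢
  constructor
  · rintro ⟨box, missing⟩
    exact missing (by omega)
  · exact fun hmem ↦ ⟨in_box hmem, fun _ ↦ hmem⟩

/-- The plane partition obtained by cyclically permuting the three axes. -/
def cycle (x : BoxedPlanePartition A B C) : BoxedPlanePartition C A B where
  cells := {y | (y.2.1, y.2.2, y.1) ∈ x.cells}
  cells_subset _ hy :=
    ⟨⟨(x.cells_subset hy).1.2.2, (x.cells_subset hy).1.1, (x.cells_subset hy).1.2.1⟩,
      ⟨(x.cells_subset hy).2.2.2, (x.cells_subset hy).2.1, (x.cells_subset hy).2.2.1⟩⟩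
  mem_of_le hone hle := x.mem_of_le ⟨hone.2.1, hone.2.2, hone.1⟩ ⟨hle.2.1, hle.2.2, hle.1⟩

/-- Complementation followed by the cyclic permutation of the axes. -/
def rotate : BoxedPlanePartition A B C ≃ BoxedPlanePartition C A B :=
  complement_involutive.toPerm.trans
    { toFun := cycle
      invFun := fun y ↦ y.cycle.cycle
      left_inv := fun _ ↦ rfl
      right_inv := fun _ ↦ rfl }

theorem mem_cells_rotate (x : BoxedPlanePartition A B C) {a b c : ℤ} :
    (a, b, c) ∈ (rotate x).cells ↔ (1 ≤ a ∧ a ≤ C) ∧ (1 ≤ b ∧ b ≤ A) ∧ (1 ≤ c ∧ c ≤ B) ∧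
      (A + 1 - b, B + 1 - c, C + 1 - a) ∉ x.cells := by
  simp only [rotate, cycle, complement, Equiv.trans_apply, Function.Involutive.coe_toPerm,
    Equiv.coe_fn_mk, Set.mem_ofPred_eq, Set.mem_Icc, Prod.le_def, Prod.fst_one, Prod.snd_one]
  tauto

end Rotation

section Height

variable (x : BoxedPlanePartition A B C)

/-- The Young diagram of `x` continued beyond the box in the directions of `j` and `k`; only the
values at `1 ≤ i ≤ A` are meaningful. -/
def Filled (i j k : ℤ) : Prop :=
  j ≤ B ∧ (j ≤ 0 ∨ k ≤ 0 ∨ (i, j, k) ∈ x.cells)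

variable {x} in
theorem Filled.of_le {i i' j j' k k' : ℤ} (h : x.Filled i' j' k') (hi₁ : 1 ≤ i) (hi : i ≤ i')
    (hj : j ≤ j') (hk : k ≤ k') : x.Filled i j k := by
  obtain ⟨hj', hfilled⟩ := h
  refine ⟨hj.trans hj', ?_⟩
  by_cases hbox : 1 ≤ j ∧ 1 ≤ k
  · exact Or.inr (Or.inr (x.mem_of_le ⟨hi₁, hbox.1, hbox.2⟩ ⟨hi, hj, hk⟩
      ((hfilled.resolve_left (by omega)).resolve_left (by omega))))
  · omega

theorem filled_rotate {a b c : ℤ} (ha₁ : 1 ≤ a) (hb₁ : 1 ≤ b) (hb : b ≤ A) :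
    (rotate x).Filled a b c ↔ ¬ x.Filled (A + 1 - b) (B + 1 - c) (C + 1 - a) := by
  by_cases hmem : (A + 1 - b, B + 1 - c, C + 1 - a) ∈ x.cells
  · simp only [Filled, mem_cells_rotate, hmem, not_true_eq_false, and_false, or_false, or_true,
      and_true]
    omega
  · simp only [Filled, mem_cells_rotate, hmem, not_false_eq_true, and_true, or_false]
    omega

open Classical in
/-- The height function of the configuration encoded by `x`: if the column `(i, j, ·)` of `x`
consists of `k` cells, then the `i`-th path from the left makes its `(B + 1 - j)`-th horizontal step
at level `k + A + B + 1 - i - j`. -/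
noncomputable def height (n m : ℤ) : ℤ :=
  (Nat.findGreatest (fun i : ℕ ↦ x.Filled i (B + i - n) (m - A + 2 * i - n)) A : ℕ)

theorem height_nonneg (n m : ℤ) : 0 ≤ x.height n m :=
  Int.natCast_nonneg _

theorem height_le (n m : ℤ) : x.height n m ≤ A := by
  classical
  exact Nat.cast_le.2 (Nat.findGreatest_le A)

theorem le_height_iff {i : ℤ} (hi₁ : 1 ≤ i) (hi : i ≤ A) (n m : ℤ) :
    i ≤ x.height n m ↔ x.Filled i (B + i - n) (m - A + 2 * i - n) := by
  classical
  lift i to ℕ using by omega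
  rw [height, Nat.cast_le]
  constructor
  · intro hle
    have top := Nat.findGreatest_of_ne_zero (n := A)
      (P := fun i : ℕ ↦ x.Filled i (B + i - n) (m - A + 2 * i - n)) rfl (by omega)
    exact top.of_le hi₁ (by omega) (by omega) (by omega)
  · exact fun hfilled ↦ Nat.le_findGreatest (Nat.cast_le.1 hi) hfilled

theorem height_eq {n m t : ℤ} (ht₀ : 0 ≤ t) (ht : t ≤ A)
    (h : ∀ i : ℤ, 1 ≤ i → i ≤ A → (x.Filled i (B + i - n) (m - A + 2 * i - n) ↔ i ≤ t)) :
    x.height n m = t := by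
  refine eq_of_forall_le_iff fun i ↦ ?_
  by_cases hi : 1 ≤ i ∧ i ≤ A
  · rw [x.le_height_iff hi.1 hi.2, h i hi.1 hi.2]
  · have nonneg := x.height_nonneg n m
    have le := x.height_le n m
    omega

theorem height_le_height_add {n m n' m' d : ℤ} (hd : 0 ≤ d) (hn : n - d ≤ n')
    (hm : m' - n' ≤ m - n + 2 * d) : x.height n m ≤ x.height n' m' + d := by
  have nonneg := x.height_nonneg n' m'
  have le := x.height_le n m
  by_cases hpos : x.height n m ≤ d
  · omega
  · have top := (x.le_height_iff (by omega) le n m).1 le_rfl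
    have next := top.of_le (i := x.height n m - d) (j := B + (x.height n m - d) - n')
      (k := m' - A + 2 * (x.height n m - d) - n') (by omega) (by omega) (by omega) (by omega)
    rw [← x.le_height_iff (by omega) (by omega)] at next
    omega

theorem height_south {n : ℤ} (hn : 0 ≤ n) : x.height n 0 = min n A := by
  refine x.height_eq (by omega) (by omega) fun i _ hi ↦ ?_
  rw [Filled]
  omega

theorem height_north {M : ℕ} (hM : M + 1 = A + B + C) {n : ℤ} (hn : n ≤ A + B) :
    x.height n M = max 0 (n - B) := by
  refine x.height_eq (by omega) (by omega) fun i hi₁ _ ↦ ?_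
  have below (hmem : (i, B + i - n, M - A + 2 * i - n) ∈ x.cells) : M - A + 2 * i - n ≤ C :=
    (x.cells_subset hmem).2.2.2
  rw [Filled, le_max_iff]
  grind

theorem isHeightFunction_height {L M : ℕ} (hL : L = A + B) (hM : M + 1 = L + C) :
    IsHeightFunction L M A x.height where
  column_le n m := by simpa using x.height_le_height_add (d := 0) le_rfl (by omega) (by omega)
  le_column_add_one n m := x.height_le_height_add zero_le_one (by omega) (by omega)
  level_le n m _ _ := by simpa using x.height_le_height_add (d := 0) le_rfl (by omega) (by omega)
  diag_le n m _ _ := by simpa using x.height_le_height_add (d := 0) le_rfl (by omega) (by omega)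
  le_antidiag_add_one n m _ _ := x.height_le_height_add zero_le_one (by omega) (by omega)
  south n hn _ := x.height_south hn
  north n _ hn := by rw [x.height_north (by omega) (by omega), hL]; push_cast; ring_nf

theorem mem_cells_iff_le_height {i j k : ℤ} (hi₁ : 1 ≤ i) (hi : i ≤ A) (hj₁ : 1 ≤ j) (hj : j ≤ B)
    (hk₁ : 1 ≤ k) :
    (i, j, k) ∈ x.cells ↔ i ≤ x.height (i + B - j) (k + (A + B) - i - j) := by
  have hj_eq : B + i - (i + B - j) = j := by ring
  have hk_eq : k + (A + B) - i - j - A + 2 * i - (i + B - j) = k := by ring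
  rw [x.le_height_iff hi₁ hi, hj_eq, hk_eq, Filled]
  grind

variable {x} in
theorem ext_of_height {y : BoxedPlanePartition A B C}
    (h : ∀ n m : ℤ, 0 ≤ n → n ≤ A + B → 0 ≤ m → m < A + B + C → x.height n m = y.height n m) :
    x = y := by
  ext ⟨i, j, k⟩
  by_cases hbox : (i, j, k) ∈ Set.Icc 1 ((A : ℤ), (B : ℤ), (C : ℤ))
  · obtain ⟨⟨hi₁ : 1 ≤ i, hj₁ : 1 ≤ j, hk₁ : 1 ≤ k⟩, hi : i ≤ A, hj : j ≤ B, hk : k ≤ C⟩ := hbox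
    rw [x.mem_cells_iff_le_height hi₁ hi hj₁ hj hk₁, y.mem_cells_iff_le_height hi₁ hi hj₁ hj hk₁,
      h _ _ (by omega) (by omega) (by omega) (by omega)]
  · exact iff_of_false (fun hmem ↦ hbox (x.cells_subset hmem))
      (fun hmem ↦ hbox (y.cells_subset hmem))

theorem le_height_rotate_iff {a n m : ℤ} (ha₁ : 1 ≤ a) (ha : a ≤ C) :
    a ≤ (rotate x).height n m ↔ x.height (m - C + a) (m + A - 1 - 2 * (n - a)) ≤ n - a := by
  have nonneg := x.height_nonneg (m - C + a) (m + A - 1 - 2 * (n - a))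
  have le := x.height_le (m - C + a) (m + A - 1 - 2 * (n - a))
  rw [le_height_iff _ ha₁ ha]
  by_cases hbox : 1 ≤ A + a - n ∧ A + a - n ≤ A
  · rw [filled_rotate x ha₁ hbox.1 hbox.2, ← Int.lt_add_one_iff, ← not_le,
      x.le_height_iff (by omega) (by omega)]
    ring_nf
  · rw [Filled]
    omega

end Height

section OfHeight

variable {L M : ℕ} {f : ℤ → ℤ → ℤ}

/-- The plane partition encoding a height function. -/
def ofHeight (hL : L = A + B) (hM : M + 1 = L + C) (hf : IsHeightFunction L M A f) :
    BoxedPlanePartition A B C where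
  cells := {y | y ∈ Set.Icc 1 ((A : ℤ), (B : ℤ), (C : ℤ)) ∧
    y.1 ≤ f (y.1 + B - y.2.1) (y.2.2 + L - y.1 - y.2.1)}
  cells_subset _ hy := hy.1
  mem_of_le := by
    rintro ⟨i, j, k⟩ ⟨i', j', k'⟩ ⟨hi₁ : 1 ≤ i, hj₁ : 1 ≤ j, hk₁ : 1 ≤ k⟩
      ⟨hi : i ≤ i', hj : j ≤ j', hk : k ≤ k'⟩
      ⟨⟨-, hi' : i' ≤ A, hj' : j' ≤ B, hk' : k' ≤ C⟩,
        hle : i' ≤ f (i' + B - j') (k' + L - i' - j')⟩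
    refine ⟨⟨⟨hi₁, hj₁, hk₁⟩, hi.trans hi', hj.trans hj', hk.trans hk'⟩, ?_⟩
    have along_i : f (i' + B - j') (k' + L - i' - j') ≤
        f (i + B - j') (k' + L - i - j') + (i' + B - j' - (i + B - j')) :=
      hf.le_add_of_sub_le_sub (by omega) (by omega) (by omega) (by omega) (by omega) (by omega)
    have along_j_k : f (i + B - j') (k' + L - i - j') ≤ f (i + B - j) (k + L - i - j) :=
      hf.le_of_sub_le_sub (by omega) (by omega) (by omega) (by omega) (by omega) (by omega)
    change i ≤ f (i + B - j) (k + L - i - j)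
    omega

theorem height_ofHeight (hL : L = A + B) (hM : M + 1 = L + C) (hf : IsHeightFunction L M A f)
    {n m : ℤ} (hn₀ : 0 ≤ n) (hn : n ≤ L) (hm₀ : 0 ≤ m) (hm : m ≤ M) :
    (ofHeight hL hM hf).height n m = f n m := by
  refine height_eq _ (hf.nonneg hn₀ hm₀ hm) (hf.le_paths hn hm₀ hm) fun i hi₁ hi ↦ ?_
  have mem_iff : (i, B + i - n, m - A + 2 * i - n) ∈ (ofHeight hL hM hf).cells ↔
      ((1 ≤ i ∧ 1 ≤ B + i - n ∧ 1 ≤ m - A + 2 * i - n) ∧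
        i ≤ A ∧ B + i - n ≤ B ∧ m - A + 2 * i - n ≤ C) ∧ i ≤ f n m := by
    have hcolumn : i + B - (B + i - n) = n := by ring
    have hlevel : m - A + 2 * i - n + L - i - (B + i - n) = m := by subst hL; push_cast; ring
    simp only [ofHeight, Set.mem_ofPred_eq, hcolumn, hlevel]
    rfl
  have j_gt := hf.le_column hn₀ hm₀ hm
  have j_le := hf.sub_le hn₀ hn hm₀ hm
  have k_le (hin : i ≤ n) := hf.le_of_add_two_mul_le hi hin hm₀ hm
  have k_gt (hni : n ≤ L - A + (i - 1)) :=
    hf.le_of_add_le_add_two_mul (u := i - 1) (by omega) hni hm₀ hm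
  rw [Filled, mem_iff]
  omega

end OfHeight

end BoxedPlanePartition

namespace FourVertexConfig

section Rotation

variable {L L' M A B C : ℕ}

/-- Configurations correspond to plane partitions with the same height function. -/
noncomputable def equivBoxedPlanePartition (hL : L = A + B) (hM : M + 1 = L + C) :
    FourVertexConfig L M A ≃ BoxedPlanePartition A B C where
  toFun c := .ofHeight hL hM (c.isHeightFunction_height (by omega))
  invFun x := ofHeight (x.isHeightFunction_height hL hM)
  left_inv _ := ext_of_height fun _ _ hn₀ hn hm₀ hm ↦
    (height_ofHeight _ hn₀ hn hm₀ hm).trans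
      (BoxedPlanePartition.height_ofHeight hL hM _ hn₀ hn hm₀ hm)
  right_inv _ := BoxedPlanePartition.ext_of_height fun _ _ hn₀ hn hm₀ hm ↦
    (BoxedPlanePartition.height_ofHeight hL hM _ hn₀ (by omega) hm₀ (by omega)).trans
      (height_ofHeight _ hn₀ (by omega) hm₀ (by omega))

theorem height_equivBoxedPlanePartition (hL : L = A + B) (hM : M + 1 = L + C)
    (c : FourVertexConfig L M A) {n m : ℤ} (hn₀ : 0 ≤ n) (hn : n ≤ L) (hm₀ : 0 ≤ m) (hm : m ≤ M) :
    (equivBoxedPlanePartition hL hM c).height n m = c.height n m :=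
  BoxedPlanePartition.height_ofHeight hL hM (c.isHeightFunction_height (by omega)) hn₀ hn hm₀ hm

/-- The bijection between configurations with `A` paths and configurations with `C` paths given by
the rotation of plane partitions in an `A × B × C` box. -/
noncomputable def rotate (hL : L = A + B) (hL' : L' = C + A) (hM : M + 1 = A + B + C) :
    FourVertexConfig L M A ≃ FourVertexConfig L' M C :=
  (equivBoxedPlanePartition hL (by omega)).trans
    (BoxedPlanePartition.rotate.trans (equivBoxedPlanePartition hL' (by omega)).symm)

theorem le_height_rotate_iff (hL : L = A + B) (hL' : L' = C + A) (hM : M + 1 = A + B + C)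
    (c : FourVertexConfig L M A) {a n m n' m' : ℤ} (ha₁ : 1 ≤ a) (ha : a ≤ C) (hn₀ : 0 ≤ n)
    (hn : n ≤ L') (hm₀ : 0 ≤ m) (hm : m ≤ M) (hn' : n' = m - C + a)
    (hm' : m' = m + A - 1 - 2 * (n - a)) (hn₀' : 0 ≤ n') (hn'_le : n' ≤ L) (hm₀' : 0 ≤ m')
    (hm'_le : m' ≤ M) :
    a ≤ (rotate hL hL' hM c).height n m ↔ c.height n' m' ≤ n - a := by
  have equiv_rotate : equivBoxedPlanePartition (C := B) hL' (by omega) (rotate hL hL' hM c) =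
      BoxedPlanePartition.rotate (equivBoxedPlanePartition hL (by omega) c) :=
    Equiv.apply_symm_apply _ _
  rw [← height_equivBoxedPlanePartition (C := B) hL' (by omega) _ hn₀ hn hm₀ hm, equiv_rotate,
    ← height_equivBoxedPlanePartition (C := C) hL (by omega) c hn₀' hn'_le hm₀' hm'_le, hn', hm',
    BoxedPlanePartition.le_height_rotate_iff _ ha₁ ha]

end Rotation

section VertexTypes

variable {L M N : ℕ} (c : FourVertexConfig L M N)

theorem isC_iff (n : ℤ) {m : ℤ} (hm₁ : 1 ≤ m) (hm : m ≤ M) :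
    isC c (n, m) = true ↔
      c.height n (m - 1) - c.height (n - 1) (m - 1) + (c.height n m - c.height (n - 1) m) = 1 := by
  rw [c.height_eq_add_v n m, c.height_eq_add_v n (m - 1), isC]
  rcases c.vertexRule_of_row n hm₁ hm with
    ⟨west, south, east, north⟩ | ⟨west, south, east, north⟩ | ⟨west, south, east, north⟩ |
      ⟨west, south, east, north⟩ <;>
    simp [west, south, east, north]

theorem isA_iff (n : ℤ) {m : ℤ} (hm₁ : 1 ≤ m) (hm : m ≤ M) :
    isA c (n, m) = true ↔ c.height n (m - 1) = c.height (n - 1) m := by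
  rw [c.height_sub_one_eq_add_h n hm₁ hm, c.height_eq_add_v n m, isA]
  rcases c.vertexRule_of_row n hm₁ hm with
    ⟨west, south, east, north⟩ | ⟨west, south, east, north⟩ | ⟨west, south, east, north⟩ |
      ⟨west, south, east, north⟩ <;>
    simp [west, south, east, north]

variable {p m u : ℤ}

theorem isC_and_le_height_sub_one_iff (hNL : N ≤ L) (hu : 0 ≤ u)
    (hp : p ≤ L - N) (hm₁ : 1 ≤ m) (h : m + 2 * u = M - L + N + p) :
    isC c (p, m) = true ∧ u ≤ c.height (p - 1) m ↔ u + 1 ≤ c.height p (m - 1) := by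
  have hc := c.isHeightFunction_height hNL
  have upper : c.height p m ≤ u :=
    hc.le_of_add_le_add_two_mul hu (by omega) (by omega) (by omega) (by omega)
  have upper_south_west : c.height (p - 1) (m - 1) ≤ u :=
    hc.le_of_add_le_add_two_mul hu (by omega) (by omega) (by omega) (by omega)
  have antidiag := hc.le_antidiag_add_one p m hm₁ (by omega)
  have column := hc.column_le p m
  have column_south := hc.le_column_add_one p (m - 1)
  have level_west := hc.level_le (p - 1) m hm₁ (by omega)
  rw [c.isC_iff p hm₁ (by omega)]
  omega

theorem isC_and_le_height_iff (hNL : N ≤ L) (hu : 0 ≤ u) (hp : p ≤ L - N)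
    (hm₁ : 1 ≤ m) (h : m + 2 * u + 1 = M - L + N + p) :
    isC c (p, m) = true ∧ u + 1 ≤ c.height p m ↔ u + 1 ≤ c.height (p - 1) (m - 1) := by
  have hc := c.isHeightFunction_height hNL
  have upper_west : c.height (p - 1) m ≤ u :=
    hc.le_of_add_le_add_two_mul hu (by omega) (by omega) (by omega) (by omega)
  have upper_south : c.height p (m - 1) ≤ u + 1 :=
    hc.le_of_add_le_add_two_mul (by omega) (by omega) (by omega) (by omega) (by omega)
  have diag := hc.diag_le p m hm₁ (by omega)
  have column := hc.le_column_add_one p m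
  have column_south := hc.column_le p (m - 1)
  have level := hc.level_le p m hm₁ (by omega)
  rw [c.isC_iff p hm₁ (by omega)]
  omega

theorem forall_isC_iff (hNL : N ≤ L) (hp₁ : 1 ≤ p) (hp : p ≤ L - N) (hm₀ : 0 ≤ m) {s : ℕ}
    (h : m + s = M - L + N + p) :
    (∀ k : ℤ, m + 1 ≤ k → k ≤ M - L + N + p → isC c (p, k) = true) ↔
      ((s : ℤ) + 1) / 2 ≤ c.height (p - ((s : ℤ) + 1) % 2) m := by
  induction s generalizing m with
  | zero =>
    have nonneg : 0 ≤ c.height (p - 1) m :=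
      (c.isHeightFunction_height hNL).nonneg (by omega) hm₀ (by omega)
    exact iff_of_true (fun k _ _ ↦ by omega) nonneg
  | succ s ih =>
    have peel : (∀ k : ℤ, m + 1 ≤ k → k ≤ M - L + N + p → isC c (p, k) = true) ↔
        isC c (p, m + 1) = true ∧
          ∀ k : ℤ, m + 1 + 1 ≤ k → k ≤ M - L + N + p → isC c (p, k) = true := by
      constructor
      · exact fun all_isC ↦
          ⟨all_isC _ le_rfl (by omega), fun k hmk ↦ all_isC k (by omega)⟩
      · rintro ⟨bottom, rest⟩ k hmk hk
        rcases hmk.eq_or_lt with rfl | hlt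
        · exact bottom
        · exact rest k hlt hk
    rw [peel, ih (by omega) (by omega)]
    rcases Nat.even_or_odd' s with ⟨u, rfl | rfl⟩
    · have half : ((2 * u : ℕ) + 1 : ℤ) / 2 = u := by omega
      have parity : ((2 * u : ℕ) + 1 : ℤ) % 2 = 1 := by omega
      have half_succ : ((2 * u + 1 : ℕ) + 1 : ℤ) / 2 = u + 1 := by omega
      have parity_succ : ((2 * u + 1 : ℕ) + 1 : ℤ) % 2 = 0 := by omega
      rw [half, parity, half_succ, parity_succ, sub_zero,
        c.isC_and_le_height_sub_one_iff hNL (by omega) hp (by omega) (by omega),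
        add_sub_cancel_right]
    · have half : ((2 * u + 1 : ℕ) + 1 : ℤ) / 2 = u + 1 := by omega
      have parity : ((2 * u + 1 : ℕ) + 1 : ℤ) % 2 = 0 := by omega
      have half_succ : ((2 * u + 1 + 1 : ℕ) + 1 : ℤ) / 2 = u + 1 := by omega
      have parity_succ : ((2 * u + 1 + 1 : ℕ) + 1 : ℤ) % 2 = 1 := by omega
      rw [half, parity, half_succ, parity_succ, sub_zero,
        c.isC_and_le_height_iff hNL (by omega) hp (by omega) (by omega), add_sub_cancel_right]

theorem forall_isA_iff (hNL : N ≤ L) {r : ℤ} (hr₁ : 1 ≤ r) (hr : r ≤ L) (hm₀ : 0 ≤ m) (hm : m < M)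
    (hmr : m < M - L + N + r) :
    (∀ k : ℤ, m + 1 ≤ k → k ≤ M - L + N + r → isA c (r, k) = true) ↔ c.height r m < 1 := by
  have hc := c.isHeightFunction_height hNL
  constructor
  · intro all_isA
    have hrN : r ≤ L - N := by
      by_contra! hrN
      have top := (c.isA_iff r (by omega) le_rfl).1 (all_isA M (by omega) (by omega))
      have level := hc.level_le r M (by omega) le_rfl
      have north := hc.north r (by omega) hr
      have north_west := hc.north (r - 1) (by omega) (by omega)
      omega
    have le_height {k : ℤ} (hmk : m ≤ k) (hk : k ≤ M - L + N + r) :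
        c.height r m ≤ c.height r k := by
      induction k, hmk using Int.leInduction with
      | base => exact le_rfl
      | succ k hmk ih =>
        have step := (c.isA_iff r (by omega) (by omega)).1 (all_isA (k + 1) (by omega) hk)
        rw [add_sub_cancel_right] at step
        exact (ih (by omega)).trans (step.trans_le (hc.column_le r (k + 1)))
    have top : c.height r (M - L + N + r) ≤ 0 :=
      hc.le_of_add_le_add_two_mul le_rfl (by omega) (by omega) (by omega) (by omega)
    exact Int.lt_add_one_of_le ((le_height hmr.le le_rfl).trans top)
  · intro height_lt_one k hmk hk
    have hrN := hc.sub_le (by omega) hr hm₀ hm.le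
    have upper := hc.antitone_level (n := r) hm₀ (m' := k - 1) (by omega) (by omega)
    have lower := hc.nonneg (n := r - 1) (m := k) (by omega) (by omega) (by omega)
    have antidiag := hc.le_of_sub_le_sub (n := r - 1) (n' := r) (m := k) (m' := k - 1) (by omega)
      (by omega) (by omega) (by omega) (by omega) (by omega)
    rw [c.isA_iff r (by omega) (by omega)]
    omega

end VertexTypes

end FourVertexConfig

/-- AFP expressed through EFP:
`G_{L,M,N}(p,q) = F_{M-L+N+1, M, M-L+1}(r̃, L-p̃)`, where `q̃ = p+q-L+N`,
`r̃ = ⌊(q̃+1)/2⌋` and `p̃ = p - ((q̃+1) mod 2)`. -/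
theorem afp_eq_efp (L M N p q : ℕ)
    (hN : 1 ≤ N) (hNL : N < L) (hLM : L ≤ M)
    (hp1 : 1 ≤ p) (hp2 : p ≤ L - N) (hq1 : L - N < p + q) (hq2 : p + q ≤ M - N) :
    AFP L M N p q =
      EFP (M - L + N + 1) M (M - L + 1)
        ((p + q + N - L + 1) / 2)
        (L - (p - ((p + q + N - L + 1) % 2))) := by
  set s := p + q + N - L
  set r := (s + 1) / 2
  set t := p - (s + 1) % 2
  have hL : L = N + (L - N) := by omega
  have hL' : M - L + N + 1 = M - L + 1 + N := by omega
  have hM : M + 1 = N + (L - N) + (M - L + 1) := by omega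
  rw [AFP, EFP, Nat.card_congr (FourVertexConfig.rotate hL hL' hM)]
  congr 2
  refine Nat.card_congr ((FourVertexConfig.rotate hL hL' hM).subtypeEquiv fun c ↦ ?_)
  have column_eq : (p : ℤ) - ((s : ℤ) + 1) % 2 = t := by omega
  have rotation : 1 ≤ (FourVertexConfig.rotate hL hL' hM c).height r (M - (L - t : ℕ)) ↔
      c.height t (M - q) ≤ r - 1 := by
    apply c.le_height_rotate_iff <;> omega
  rw [c.forall_isC_iff (s := s) hNL.le (by omega) (by omega) (by omega) (by omega), column_eq,
    FourVertexConfig.forall_isA_iff _ (by omega) (by omega) (by omega) (by omega) (by omega)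
      (by omega), ← not_le, rotation]
  omega
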